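/- Let l ≥ 3, let α ∈ R^l be an admissible function, and let 1 ≤ i < j ≤ l. Then ord_{ij}α ≥ −4; and if moreover α ∈ R₀^l is indecomposable, then ord_{ij}α ≥ −2. -/

import Mathlib

open scoped Classical

noncomputable section

namespace Griess

open MvPolynomial

variable {k : Type} [Field k]

/-- The field `k(z₁,…,z_l)` of rational functions over `k` in `l` variables. -/
abbrev RF (k : Type) [Field k] (l : ℕ) : Type := FractionRing (MvPolynomial (Fin l) k)

/-- The variable `zᵢ` as an element of the rational function field. -/
def zv {k : Type} [Field k] {l : ℕ} (i : Fin l) : RF k l :=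
  algebraMap (MvPolynomial (Fin l) k) (RF k l) (MvPolynomial.X i)

/-- The space `Φ^l` of rational functions of the form
`p(z₁,…,z_l) · ∏_{i<j} (zᵢ - z_j)^{k_{ij}}`. -/
def Phi (k : Type) [Field k] (l : ℕ) : Set (RF k l) :=
  { x | ∃ (p : MvPolynomial (Fin l) k) (e : Fin l → Fin l → ℤ),
      x = algebraMap (MvPolynomial (Fin l) k) (RF k l) p *
        ∏ i : Fin l, ∏ j : Fin l, (if i < j then (zv i - zv j) ^ e i j else 1) }

/-- `D` is the family of partial derivative operators `∂_{z₁},…,∂_{z_l}`: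
a family of `k`-linear derivations with `D i (z j) = δ_{ij}`. -/
def IsPartialDeriv {l : ℕ} (D : Fin l → Derivation k (RF k l) (RF k l)) : Prop :=
  ∀ i j : Fin l, D i (zv j) = if j = i then 1 else 0

/-- The operator `Δ = Σᵢ ∂_{zᵢ}`. -/
def Delta {l : ℕ} (D : Fin l → Derivation k (RF k l) (RF k l)) (α : RF k l) : RF k l :=
  ∑ i, D i α

/-- The operator `Δ*(n₁,…,n_l) = Σᵢ (zᵢ² ∂_{zᵢ} + nᵢ zᵢ)`. -/
def DeltaStar {l : ℕ} (D : Fin l → Derivation k (RF k l) (RF k l)) (n : Fin l → ℤ)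
    (α : RF k l) : RF k l :=
  ∑ i, ((zv i) ^ 2 * D i α + (n i : RF k l) * zv i * α)

section Subst

variable {l : ℕ}

/-- The embedding of polynomials in `z₁,…,z_l` into rational functions of
`z₁,…,z_l` and one extra variable `t` (`= RatFunc.X`). -/
def toRatFuncHom (k : Type) [Field k] (l : ℕ) :
    Polynomial (MvPolynomial (Fin l) k) →+* RatFunc (RF k l) :=
  (algebraMap (Polynomial (RF k l)) (RatFunc (RF k l))).comp
    (Polynomial.mapRingHom (algebraMap (MvPolynomial (Fin l) k) (RF k l)))

lemma toRatFuncHom_injective : Function.Injective (toRatFuncHom k l) := by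
  have h1 : Function.Injective (algebraMap (Polynomial (RF k l)) (RatFunc (RF k l))) :=
    IsFractionRing.injective _ _
  have h2 : Function.Injective
      (Polynomial.mapRingHom (algebraMap (MvPolynomial (Fin l) k) (RF k l))) :=
    Polynomial.map_injective _ (IsFractionRing.injective _ _)
  exact fun a b hab => h2 (h1 hab)

/-- Polynomial level substitution `z_j ↦ t·z_j` for `j ∈ J`. -/
def scaleAux (k : Type) [Field k] (l : ℕ) (J : Finset (Fin l)) :
    MvPolynomial (Fin l) k →+* Polynomial (MvPolynomial (Fin l) k) :=
  (MvPolynomial.aeval (R := k) fun i =>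
    if i ∈ J then Polynomial.X * Polynomial.C (MvPolynomial.X i)
    else Polynomial.C (MvPolynomial.X i)).toRingHom

lemma scaleAux_injective (J : Finset (Fin l)) :
    Function.Injective (scaleAux k l J) := by
  have h : (Polynomial.evalRingHom (1 : MvPolynomial (Fin l) k)).comp (scaleAux k l J)
      = RingHom.id _ := by
    apply MvPolynomial.ringHom_ext
    · intro r; simp [scaleAux]
    · intro i; by_cases hi : i ∈ J <;> simp [scaleAux, hi]
  intro p q hpq
  have hp := DFunLike.congr_fun h p
  have hq := DFunLike.congr_fun h q
  simp only [RingHom.comp_apply, RingHom.id_apply] at hp hq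
  rw [← hp, ← hq, hpq]

/-- The substitution `z_j ↦ t·z_j` (for `j ∈ J`), as a map from rational functions
in `z₁,…,z_l` to rational functions in `z₁,…,z_l` and `t`.  Reading off the
coefficients of the Laurent expansion in `t` at `t = 0` of `scaleJ J α` yields the
decomposition of `α` into its homogeneous components with respect to the total degree
in the variables `{z_j : j ∈ J}`, i.e. the expansion of `α` in the domain where the
variables of `J` are much smaller than the remaining variables. -/
def scaleJ (J : Finset (Fin l)) : RF k l →+* RatFunc (RF k l) :=
  IsFractionRing.lift (g := (toRatFuncHom k l).comp (scaleAux k l J))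
    (fun a b hab => scaleAux_injective J (toRatFuncHom_injective hab))

/-- Polynomial level substitution `z_i ↦ z_j + t`. -/
def subPairAux (k : Type) [Field k] (l : ℕ) (i j : Fin l) :
    MvPolynomial (Fin l) k →+* Polynomial (MvPolynomial (Fin l) k) :=
  (MvPolynomial.aeval (R := k) fun s =>
    if s = i then Polynomial.X + Polynomial.C (MvPolynomial.X j)
    else Polynomial.C (MvPolynomial.X s)).toRingHom

lemma subPairAux_injective (i j : Fin l) :
    Function.Injective (subPairAux k l i j) := by
  have h : (Polynomial.evalRingHom (MvPolynomial.X i - MvPolynomial.X j)).comp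
      (subPairAux k l i j) = RingHom.id _ := by
    apply MvPolynomial.ringHom_ext
    · intro r; simp [subPairAux]
    · intro s; by_cases hs : s = i <;> simp [subPairAux, hs]
  intro p q hpq
  have hp := DFunLike.congr_fun h p
  have hq := DFunLike.congr_fun h q
  simp only [RingHom.comp_apply, RingHom.id_apply] at hp hq
  rw [← hp, ← hq, hpq]

/-- The substitution `z_i ↦ z_j + t`, as a map from rational functions in `z₁,…,z_l`
to rational functions in the variables `z₁,…,z_l` and `t`.  Reading off the Laurent
coefficients in `t` at `t = 0` yields the expansion of a rational function in powers
of `z_i - z_j`, with coefficients not involving `z_i`. -/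
def subPair (i j : Fin l) : RF k l →+* RatFunc (RF k l) :=
  IsFractionRing.lift (g := (toRatFuncHom k l).comp (subPairAux k l i j))
    (fun a b hab => subPairAux_injective i j (toRatFuncHom_injective hab))

end Subst

/-- The coefficient of `tᵐ` in the Laurent expansion at `t = 0` of a rational
function of `t`. -/
def lcoeff {L : Type} [Field L] (m : ℤ) (f : RatFunc L) : L :=
  (f : LaurentSeries L).coeff m

/-- The component `(α)_n` of `α` of degree `n` with respect to the partition
`{1,…,l} = Jᶜ ⊔ J` and the weights `d`:  the part of the expansion of `α` in the
domain where the variables of `J` are much smaller than those of `Jᶜ` whose total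
degree in the variables `{z_j : j ∈ J}` equals `n - Σ_{j∈J} d_j`. -/
def component {l : ℕ} (J : Finset (Fin l)) (d : Fin l → ℤ) (n : ℤ) (α : RF k l) :
    RF k l :=
  lcoeff (n - ∑ j ∈ J, d j) (scaleJ J α)

/-- `α` is homogeneous of total degree `d` in the variables `{z_i : i ∈ S}`:
substituting `z_i ↦ t·z_i` for `i ∈ S` multiplies `α` by `t^d`. -/
def IsHomogeneousOn {l : ℕ} (S : Finset (Fin l)) (d : ℤ) (α : RF k l) : Prop :=
  scaleJ S α = RatFunc.X ^ d * RatFunc.C α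

/-- `ρ^{(m)}_{ij} α`: the coefficient of `(z_i - z_j)^m` in the expansion of `α`
in powers of `z_i - z_j` (the coefficients do not involve `z_i`). -/
def rho {l : ℕ} (i j : Fin l) (m : ℤ) (α : RF k l) : RF k l :=
  lcoeff m (subPair i j α)

/-- `α` is a rational function of the variables `{z_i : i ∈ S}` only. -/
def dependsOnlyOn {l : ℕ} (S : Finset (Fin l)) (α : RF k l) : Prop :=
  α ∈ Subfield.closure (Set.range (algebraMap k (RF k l)) ∪ {x | ∃ i ∈ S, x = zv i})

/-- `α` is an admissible function of the variables `{z_i : i ∈ S}` (the space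
`R^{|S|}`):  `α ∈ Φ` is a rational function of the variables of `S` only, it is
`(4,…,4)`-regular and homogeneous of degree `-2|S|` in these variables, and all its
components of negative degree, as well as those of degree `1`, vanish (with respect
to every partition of `S` and all weights equal to `2`). -/
def Admissible {l : ℕ} (D : Fin l → Derivation k (RF k l) (RF k l)) (S : Finset (Fin l))
    (α : RF k l) : Prop :=
  α ∈ Phi k l ∧ dependsOnlyOn S α ∧
    (∑ i ∈ S, ((zv i) ^ 2 * D i α + 4 * zv i * α)) = 0 ∧
    IsHomogeneousOn S (-(2 * (S.card : ℤ))) α ∧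
    ∀ J ⊆ S, ∀ n : ℤ, (n < 0 ∨ n = 1) → component J (fun _ => 2) n α = 0

/-- `α` is an indecomposable admissible function of the variables `{z_i : i ∈ S}`
(the space `R₀^{|S|}`): admissible, and all the components `(α)₀` with respect to
partitions of `S` into two nonempty parts vanish. -/
def AdmissibleInd {l : ℕ} (D : Fin l → Derivation k (RF k l) (RF k l))
    (S : Finset (Fin l)) (α : RF k l) : Prop :=
  Admissible D S α ∧
    ∀ J ⊆ S, J ≠ ∅ → J ≠ S → component J (fun _ => 2) 0 α = 0

section Shift

variable {l : ℕ}

/-- Polynomial level substitution `z_s ↦ z_s - z_t` for `s ∈ S`. -/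
def shiftAuxP (k : Type) [Field k] (l : ℕ) (S : Finset (Fin l)) (t : Fin l) :
    MvPolynomial (Fin l) k →+* MvPolynomial (Fin l) k :=
  (MvPolynomial.aeval (R := k) fun s =>
    if s ∈ S then MvPolynomial.X s - MvPolynomial.X t else MvPolynomial.X s).toRingHom

lemma shiftAuxP_injective (S : Finset (Fin l)) (t : Fin l) (ht : t ∉ S) :
    Function.Injective (shiftAuxP k l S t) := by
  have h : ((MvPolynomial.aeval (R := k) fun s =>
      if s ∈ S then MvPolynomial.X s + MvPolynomial.X t
      else MvPolynomial.X s).toRingHom).comp (shiftAuxP k l S t) = RingHom.id _ := by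
    apply MvPolynomial.ringHom_ext
    · intro r; simp [shiftAuxP]
    · intro s
      by_cases hs : s ∈ S
      · have hst : s ≠ t := fun hst => ht (hst ▸ hs)
        simp [shiftAuxP, hs, ht]
      · simp [shiftAuxP, hs]
  intro p q hpq
  have hp := DFunLike.congr_fun h p
  have hq := DFunLike.congr_fun h q
  simp only [RingHom.comp_apply, RingHom.id_apply] at hp hq
  rw [← hp, ← hq, hpq]

/-- The shift operator substituting `z_s - z_t` for `z_s`, for all `s ∈ S`. -/
def shiftT (S : Finset (Fin l)) (t : Fin l) (ht : t ∉ S) : RF k l →+* RF k l :=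
  IsFractionRing.lift
    (g := (algebraMap (MvPolynomial (Fin l) k) (RF k l)).comp (shiftAuxP k l S t))
    (fun a b hab =>
      shiftAuxP_injective S t ht (IsFractionRing.injective _ _ hab))

/-- The operator `ℰ = Σ_{s ∈ S} (-z_s⁻¹ ∂_{z_s} + 2 z_s⁻²)`. -/
def curlyE {l : ℕ} (D : Fin l → Derivation k (RF k l) (RF k l)) (S : Finset (Fin l))
    (β : RF k l) : RF k l :=
  ∑ s ∈ S, (-((zv s)⁻¹ * D s β) + 2 * (zv s) ^ (-2 : ℤ) * β)

end Shift

end Griess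

/-!
The vector fields `L_n = ∑ zᵢ^(n+1) ∂ᵢ` with `n = -1, 0, 1` span an `sl₂`, and adding the
multiplication by `∑ nᵢ zᵢ` to `L_1` and half the constant `∑ nᵢ` to `L_0` gives the `sl₂` that
contains `Δ = L_{-1}` and `Δ*(n₁,…,n_l)`. A regular homogeneous `α` of degree `d` is killed by
`Δ*` and has weight `2d + ∑ nᵢ`. On `Φ` the operator `Δ` is locally nilpotent, because it lowers
the degree of the polynomial factor and kills the differences `zᵢ - z_j`; hence the weight of
`α ≠ 0` is a natural number and, if it is at most zero, `Δα = 0`: such an `α` is invariant under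
translations.

Let `q` be a translation-invariant polynomial prime to `zᵢ - z_j`. Its restriction to `zᵢ = z_j`
is nonzero, and so is its restriction to `zᵢ = z_j = 0`, of which the former is a translate.
Therefore a translation-invariant `α ∈ Φ` has the same order in `zᵢ - z_j` as under the scaling
of `zᵢ` and `z_j`, and the latter is read off from the components for the part `{i, j}`; the
weights `2` shift their degrees by `4`.
-/

namespace Griess

section Sl2

variable {R L M : Type*} [CommRing R] [IsDomain R] [CharZero R] [LieRing L] [LieAlgebra R L]
  [AddCommGroup M] [Module R M] [Module.IsTorsionFree R M] [LieRingModule L M] [LieModule R L M]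
  {h e f : L} {t : IsSl2Triple h e f} {m : M} {μ : R}

lemma exists_nat_eq_and_pow_toEnd_f_eq_zero (P : t.HasPrimitiveVectorWith m μ) {N : ℕ}
    (hN : (LieModule.toEnd R L M f ^ N) m = 0) :
    ∃ n : ℕ, μ = n ∧ (LieModule.toEnd R L M f ^ (n + 1)) m = 0 := by
  obtain ⟨n, hn, hn'⟩ := Nat.exists_not_and_succ_of_not_zero_of_exists
    (p := fun n ↦ (LieModule.toEnd R L M f ^ n) m = 0) P.ne_zero ⟨N, hN⟩
  refine ⟨n, ?_, hn'⟩
  have he := P.lie_e_pow_succ_toEnd_f n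
  rw [hn', lie_zero, eq_comm, smul_eq_zero_iff_left hn, mul_eq_zero, sub_eq_zero] at he
  exact he.resolve_left (Nat.cast_add_one_ne_zero n)

end Sl2

section Sl2Derivation

attribute [local instance] LieRing.ofAssociativeRing

variable {R A : Type*} [CommRing R] [CommRing A] [Algebra R A] {h e f : Derivation R A A}

lemma lie_mulLeft (f : Derivation R A A) (g : A) :
    ⁅(f : Module.End R A), LinearMap.mulLeft R g⁆ = LinearMap.mulLeft R (f g) := by
  ext x
  simp [Ring.lie_def, mul_comm]

lemma lie_intCast_eq_zero (c : ℤ) (x : Module.End R A) : ⁅(c : Module.End R A), x⁆ = 0 :=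
  (Int.cast_commute c x).lie_eq

lemma isSl2Triple_twist (t : IsSl2Triple h e f) {g : A} {c : ℤ} (hhg : h g = 2 * g)
    (hfg : f g = c) :
    IsSl2Triple (L := Module.End R A)
      (h + (c : Module.End R A)) (e - LinearMap.mulLeft R g) f where
  h_ne_zero hc := by
    have hc0 : (c : A) = 0 := by simpa using DFunLike.congr_fun hc 1
    refine t.h_ne_zero (Derivation.ext fun x ↦ ?_)
    simpa [hc0] using DFunLike.congr_fun hc x
  lie_e_f := by
    have hmul : LinearMap.mulLeft R (c : A) = (c : Module.End R A) := by
      ext x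
      simp
    rw [sub_lie, ← Derivation.commutator_coe_linear_map, t.lie_e_f, ← lie_skew, lie_mulLeft, hfg,
      hmul, sub_neg_eq_add]
  lie_h_e_nsmul := by
    have hmul : LinearMap.mulLeft R (2 * g) = 2 • LinearMap.mulLeft R g := by
      ext x
      simp
    rw [add_lie, lie_intCast_eq_zero, add_zero, lie_sub, ← Derivation.commutator_coe_linear_map,
      t.lie_h_e_nsmul, lie_mulLeft, hhg, hmul, smul_sub]
    rfl
  lie_h_f_nsmul := by
    rw [add_lie, lie_intCast_eq_zero, add_zero, ← Derivation.commutator_coe_linear_map,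
      t.lie_h_f_nsmul]
    rfl

lemma f_apply_eq_zero_of_e_apply_eq_mul [IsDomain R] [CharZero R] [Module.IsTorsionFree R A]
    (t : IsSl2Triple h e f) {g x : A} {c d : ℤ} (hhg : h g = 2 * g) (hfg : f g = c)
    (he : e x = g * x) (hd : h x = d * x) (hdc : d + c ≤ 0) {N : ℕ} (hN : f^[N] x = 0) :
    f x = 0 := by
  rcases eq_or_ne x 0 with rfl | hx
  · simp
  have P : (isSl2Triple_twist t hhg hfg).HasPrimitiveVectorWith x (d + c : R) :=
    { ne_zero := hx
      lie_h := by simp [hd, Algebra.smul_def, add_mul]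
      lie_e := by simp [he] }
  have hpow (n : ℕ) : (LieModule.toEnd R (Module.End R A) A f ^ n) x = f^[n] x := by
    rw [LieModule.toEnd_module_end, LieHom.id_apply, Module.End.pow_apply]
    rfl
  obtain ⟨n, hn, hfn⟩ := exists_nat_eq_and_pow_toEnd_f_eq_zero P (N := N) (by rw [hpow, hN])
  obtain rfl : n = 0 := by
    have : d + c = n := by exact_mod_cast hn
    omega
  simpa [hpow] using hfn

end Sl2Derivation

section Translation

open MvPolynomial

variable {σ R : Type*} [CommRing R]

/-- The translation `z_a ↦ z_a + t` of all variables by a common new variable `t`, with values in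
the polynomials in `t`. -/
def translate (σ R : Type*) [CommRing R] :
    MvPolynomial σ R →ₐ[R] Polynomial (MvPolynomial σ R) :=
  aeval fun a ↦ Polynomial.C (X a) + Polynomial.X

/-- The infinitesimal translation `∑ₐ ∂/∂z_a`, which makes sense for infinitely many variables as
well. -/
def translationDeriv (σ R : Type*) [CommRing R] :
    Derivation R (MvPolynomial σ R) (MvPolynomial σ R) :=
  mkDerivation R 1

lemma eval_translate (c p : MvPolynomial σ R) :
    (translate σ R p).eval c = aeval (fun a ↦ X a + c) p := by
  induction p using MvPolynomial.induction_on with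
  | C r => simp [translate]
  | add p q hp hq => simp only [map_add, Polynomial.eval_add, hp, hq]
  | mul_X p a hp => simp only [map_mul, Polynomial.eval_mul, hp]; simp [translate]

lemma eval_zero_translate (p : MvPolynomial σ R) : (translate σ R p).eval 0 = p := by
  simp [eval_translate]

lemma derivative_translate (p : MvPolynomial σ R) :
    (translate σ R p).derivative = translate σ R (translationDeriv σ R p) := by
  induction p using MvPolynomial.induction_on with
  | C r => simp [translate, translationDeriv]
  | add p q hp hq => simp only [map_add, hp, hq]
  | mul_X p a hp =>
    rw [map_mul, Polynomial.derivative_mul, hp, Derivation.leibniz]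
    simp [translate, translationDeriv, mul_comm, add_comm]

lemma translationDeriv_isLocallyNilpotent (p : MvPolynomial σ R) :
    ∃ N, (translationDeriv σ R)^[N] p = 0 := by
  have iterate_derivative (n : ℕ) : Polynomial.derivative^[n] (translate σ R p) =
      translate σ R ((translationDeriv σ R)^[n] p) :=
    (Function.Semiconj.iterate_right (f := translate σ R)
      (fun q ↦ (derivative_translate q).symm) n p).symm
  refine ⟨(translate σ R p).natDegree + 1, ?_⟩
  rw [← eval_zero_translate ((translationDeriv σ R)^[_] p), ← iterate_derivative,
    Polynomial.iterate_derivative_eq_zero (Nat.lt_succ_self _), Polynomial.eval_zero]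

lemma aeval_X_add_of_translationDeriv_eq_zero [IsDomain R] [CharZero R] {p : MvPolynomial σ R}
    (hp : translationDeriv σ R p = 0) (c : MvPolynomial σ R) :
    aeval (fun a ↦ X a + c) p = p := by
  have hconst : translate σ R p = Polynomial.C ((translate σ R p).coeff 0) :=
    Polynomial.eq_C_of_derivative_eq_zero (by rw [derivative_translate, hp, map_zero])
  rw [← eval_translate, hconst, Polynomial.eval_C, Polynomial.coeff_zero_eq_eval_zero,
    eval_zero_translate]

end Translation

section Order

open MvPolynomial RatFunc WithZero

lemma polynomialValuationX_le_exp_iff {L : Type} [Field L] {f : RatFunc L} {N : ℤ} :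
    polynomialValuationX L f ≤ exp (-N) ↔ ∀ n < N, lcoeff n f = 0 := by
  rw [valuation_eq_LaurentSeries_valuation]
  exact LaurentSeries.valuation_le_iff_coeff_lt_eq_zero L

variable {k : Type} [Field k] {l : ℕ}

lemma polynomialValuationX_toRatFuncHom_eq_one {F : Polynomial (MvPolynomial (Fin l) k)}
    (hF : F.coeff 0 ≠ 0) : polynomialValuationX (RF k l) (toRatFuncHom k l F) = 1 := by
  rw [toRatFuncHom, RingHom.comp_apply,
    IsDedekindDomain.HeightOneSpectrum.valuation_eq_one_iff_notMem, Polynomial.idealX_span,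
    Ideal.mem_span_singleton, Polynomial.X_dvd_iff]
  simpa using hF

lemma scaleJ_algebraMap (J : Finset (Fin l)) (p : MvPolynomial (Fin l) k) :
    scaleJ J (algebraMap _ _ p) = toRatFuncHom k l (scaleAux k l J p) :=
  IsFractionRing.lift_algebraMap (g := (toRatFuncHom k l).comp (scaleAux k l J)) _ p

lemma subPair_algebraMap (i j : Fin l) (p : MvPolynomial (Fin l) k) :
    subPair i j (algebraMap _ _ p) = toRatFuncHom k l (subPairAux k l i j p) :=
  IsFractionRing.lift_algebraMap (g := (toRatFuncHom k l).comp (subPairAux k l i j)) _ p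

lemma X_sub_X_ne_zero {σ R : Type*} [CommRing R] [Nontrivial R] {a b : σ} (hab : a ≠ b) :
    (X a - X b : MvPolynomial σ R) ≠ 0 :=
  sub_ne_zero.2 fun h ↦ hab (X_injective h)

lemma not_isUnit_X_sub_X {σ R : Type*} [CommRing R] [Nontrivial R] (a b : σ) :
    ¬ IsUnit (X a - X b : MvPolynomial σ R) := fun h ↦ by
  simpa using h.map (aeval fun _ ↦ (0 : R))

lemma X_sub_X_dvd_of_coeff_zero_subPairAux {i j : Fin l} {p : MvPolynomial (Fin l) k}
    (hp : (subPairAux k l i j p).coeff 0 = 0) : X i - X j ∣ p := by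
  have eval_subPairAux : (Polynomial.evalRingHom (X i - X j)).comp (subPairAux k l i j) =
      RingHom.id _ := by
    apply ringHom_ext
    · simp [subPairAux]
    · intro s
      by_cases hs : s = i <;> simp [subPairAux, hs]
  obtain ⟨F, hF⟩ := Polynomial.X_dvd_iff.2 hp
  have hpF := DFunLike.congr_fun eval_subPairAux p
  rw [RingHom.comp_apply, hF] at hpF
  exact ⟨F.eval (X i - X j), by simpa using hpF.symm⟩

lemma coeff_zero_subPairAux_eq_zero [CharZero k] {i j : Fin l} {p : MvPolynomial (Fin l) k}
    (hp : translationDeriv (Fin l) k p = 0) (h : (scaleAux k l {i, j} p).coeff 0 = 0) :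
    (subPairAux k l i j p).coeff 0 = 0 := by
  let τ : MvPolynomial (Fin l) k →ₐ[k] MvPolynomial (Fin l) k := aeval fun a ↦ X a + -X j
  have subPairAux_translate :
      ((Polynomial.evalRingHom 0).comp (subPairAux k l i j)).comp τ.toRingHom =
        τ.toRingHom.comp ((Polynomial.evalRingHom 0).comp (scaleAux k l {i, j})) := by
    apply ringHom_ext
    · simp [subPairAux, scaleAux, τ]
    · intro s
      by_cases hsi : s = i <;> by_cases hsj : s = j <;> by_cases hji : j = i <;>
        simp_all [subPairAux, scaleAux, τ]
  have hτ : τ p = p := aeval_X_add_of_translationDeriv_eq_zero hp (-X j)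
  rw [Polynomial.coeff_zero_eq_eval_zero] at h ⊢
  simpa [hτ, h] using DFunLike.congr_fun subPairAux_translate p

lemma translationDeriv_X_sub_X {σ R : Type*} [CommRing R] (a b : σ) :
    translationDeriv σ R (X a - X b) = 0 := by
  simp [translationDeriv]

lemma polynomialValuationX_subPair_X_sub_X {i j : Fin l} (hij : i ≠ j) :
    polynomialValuationX (RF k l) (toRatFuncHom k l (subPairAux k l i j (X i - X j))) =
      polynomialValuationX (RF k l) (toRatFuncHom k l (scaleAux k l {i, j} (X i - X j))) := by
  have hsub : subPairAux k l i j (X i - X j) = Polynomial.X := by simp [subPairAux, hij.symm]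
  have hscale : scaleAux k l {i, j} (X i - X j) = Polynomial.X * Polynomial.C (X i - X j) := by
    simp [scaleAux, mul_sub]
  have hunit : polynomialValuationX (RF k l) (toRatFuncHom k l (Polynomial.C (X i - X j))) = 1 :=
    polynomialValuationX_toRatFuncHom_eq_one (by simpa using X_sub_X_ne_zero hij)
  rw [hsub, hscale, map_mul, map_mul, hunit, mul_one]

lemma polynomialValuationX_subPair_algebraMap [CharZero k] {i j : Fin l} (hij : i ≠ j)
    {p : MvPolynomial (Fin l) k} (hp : translationDeriv (Fin l) k p = 0) :
    polynomialValuationX (RF k l) (subPair i j (algebraMap _ _ p)) =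
      polynomialValuationX (RF k l) (scaleJ {i, j} (algebraMap _ _ p)) := by
  rcases eq_or_ne p 0 with rfl | hp0
  · simp
  obtain ⟨n, q, hq, rfl⟩ := WfDvdMonoid.max_power_factor' hp0 (not_isUnit_X_sub_X i j)
  have hq' : translationDeriv (Fin l) k q = 0 := by
    rw [Derivation.leibniz, Derivation.leibniz_pow, translationDeriv_X_sub_X] at hp
    simpa [X_sub_X_ne_zero hij] using hp
  have hsub : (subPairAux k l i j q).coeff 0 ≠ 0 :=
    mt X_sub_X_dvd_of_coeff_zero_subPairAux hq
  have hscale : (scaleAux k l {i, j} q).coeff 0 ≠ 0 :=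
    mt (coeff_zero_subPairAux_eq_zero hq') hsub
  simp only [subPair_algebraMap, scaleJ_algebraMap, map_mul, map_pow,
    polynomialValuationX_subPair_X_sub_X hij, polynomialValuationX_toRatFuncHom_eq_one hsub,
    polynomialValuationX_toRatFuncHom_eq_one hscale]

end Order

section Derivations

open MvPolynomial

variable {k : Type} [Field k] {l : ℕ}

lemma derivation_ext_zv {E F : Derivation k (RF k l) (RF k l)} (h : ∀ a, E (zv a) = F (zv a)) :
    E = F := by
  have heq : E.compAlgebraMap (MvPolynomial (Fin l) k) =
      F.compAlgebraMap (MvPolynomial (Fin l) k) := derivation_ext h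
  have hpoly (p : MvPolynomial (Fin l) k) : E (algebraMap _ _ p) = F (algebraMap _ _ p) :=
    DFunLike.congr_fun heq p
  ext x
  obtain ⟨a, b, -, rfl⟩ := IsFractionRing.div_surjective (A := MvPolynomial (Fin l) k) x
  rw [Derivation.leibniz_div, Derivation.leibniz_div, hpoly, hpoly]

lemma zv_ne_zero (a : Fin l) : (zv a : RF k l) ≠ 0 := by
  simp [zv]

variable {D : Fin l → Derivation k (RF k l) (RF k l)}

/-- The generator `L_n = ∑ᵢ zᵢ^(n+1) ∂ᵢ` of the Witt algebra, acting on rational functions in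
`z₁,…,z_l`. The sign is such that `L_{-1} = Δ`. -/
def witt (D : Fin l → Derivation k (RF k l) (RF k l)) (n : ℤ) : Derivation k (RF k l) (RF k l) :=
  ∑ i, (zv i : RF k l) ^ (n + 1) • D i

lemma witt_apply (n : ℤ) (x : RF k l) : witt D n x = ∑ i, zv i ^ (n + 1) * D i x := by
  have := congrFun (map_sum (Derivation.coeFnAddMonoidHom (R := k) (A := RF k l) (M := RF k l))
    (fun i ↦ (zv i : RF k l) ^ (n + 1) • D i) Finset.univ) x
  rwa [Finset.sum_apply] at this

lemma Delta_eq_witt (x : RF k l) : Delta D x = witt D (-1) x := by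
  simp [witt_apply, Delta]

lemma DeltaStar_eq_witt (n : Fin l → ℤ) (x : RF k l) :
    DeltaStar D n x = witt D 1 x + (∑ i, (n i : RF k l) * zv i) * x := by
  rw [witt_apply, DeltaStar, Finset.sum_add_distrib, Finset.sum_mul]
  norm_cast

lemma witt_zv (hD : IsPartialDeriv D) (n : ℤ) (a : Fin l) :
    witt D n (zv a) = zv a ^ (n + 1) := by
  simp [witt_apply, hD _ a]

lemma lie_witt (hD : IsPartialDeriv D) (m n : ℤ) :
    ⁅witt D m, witt D n⁆ = (n - m) • witt D (m + n) := by
  refine derivation_ext_zv fun a ↦ ?_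
  have hz := zv_ne_zero (k := k) a
  rw [Derivation.commutator_apply, Derivation.smul_apply, witt_zv hD, witt_zv hD, witt_zv hD,
    Derivation.leibniz_zpow, Derivation.leibniz_zpow, witt_zv hD, witt_zv hD]
  simp only [smul_eq_mul, zsmul_eq_mul, add_sub_cancel_right, zpow_add₀ hz, zpow_one]
  push_cast
  ring

lemma witt_neg_one_algebraMap (hD : IsPartialDeriv D) (p : MvPolynomial (Fin l) k) :
    witt D (-1) (algebraMap _ _ p) = algebraMap _ _ (translationDeriv (Fin l) k p) := by
  have heq : (witt D (-1)).compAlgebraMap (MvPolynomial (Fin l) k) =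
      (Algebra.linearMap (MvPolynomial (Fin l) k) (RF k l)).compDer (translationDeriv (Fin l) k) :=
    derivation_ext fun a ↦ by simpa [translationDeriv, zv] using witt_zv hD (-1) a
  exact DFunLike.congr_fun heq p

lemma eval_one_scaleAux (J : Finset (Fin l)) (p : MvPolynomial (Fin l) k) :
    (scaleAux k l J p).eval 1 = p := by
  have heq : (Polynomial.evalRingHom 1).comp (scaleAux k l J) = RingHom.id _ := by
    apply ringHom_ext
    · simp [scaleAux]
    · intro a
      by_cases ha : a ∈ J <;> simp [scaleAux, ha]
  exact DFunLike.congr_fun heq p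

lemma witt_zero_algebraMap (hD : IsPartialDeriv D) (p : MvPolynomial (Fin l) k) :
    witt D 0 (algebraMap _ _ p) =
      algebraMap _ _ ((scaleAux k l Finset.univ p).derivative.eval 1) := by
  induction p using MvPolynomial.induction_on with
  | C c =>
    rw [← algebraMap_eq (R := k), ← IsScalarTower.algebraMap_apply, Derivation.map_algebraMap]
    simp [scaleAux]
  | add p q hp hq => simp only [map_add, hp, hq, Polynomial.eval_add]
  | mul_X p a hp =>
    have hX : witt D 0 (algebraMap (MvPolynomial (Fin l) k) (RF k l) (X a)) =
        algebraMap (MvPolynomial (Fin l) k) _ (X a) := by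
      simpa [zv] using witt_zv hD 0 a
    have hscale : scaleAux k l Finset.univ (X a) = Polynomial.X * Polynomial.C (X a) := by
      simp [scaleAux]
    rw [map_mul, Derivation.leibniz, hX, hp, map_mul, hscale, Polynomial.derivative_mul]
    simp [eval_one_scaleAux]
    ring

lemma IsHomogeneousOn.scaleAux_mul_eq {J : Finset (Fin l)} {m n : ℕ}
    {a b : MvPolynomial (Fin l) k} (hb : b ≠ 0)
    (h : IsHomogeneousOn J (n - m) (algebraMap _ (RF k l) a / algebraMap _ _ b)) :
    Polynomial.X ^ m * (scaleAux k l J a * Polynomial.C b) =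
      Polynomial.X ^ n * (scaleAux k l J b * Polynomial.C a) := by
  have hX : toRatFuncHom k l Polynomial.X = RatFunc.X := by simp [toRatFuncHom]
  have hC (p) : toRatFuncHom k l (Polynomial.C p) = RatFunc.C (algebraMap _ _ p) := by
    simp [toRatFuncHom]
  have hX0 : (RatFunc.X : RatFunc (RF k l)) ≠ 0 := RatFunc.X_ne_zero
  have hCb : RatFunc.C (algebraMap _ (RF k l) b) ≠ 0 := by simpa using hb
  have hSb : scaleJ J (algebraMap _ (RF k l) b) ≠ 0 := by simpa using hb
  apply toRatFuncHom_injective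
  rw [IsHomogeneousOn, map_div₀, map_div₀, zpow_sub₀ hX0, zpow_natCast, zpow_natCast] at h
  simp only [map_mul, map_pow, hX, hC, ← scaleJ_algebraMap]
  field_simp at h
  linear_combination h

lemma IsHomogeneousOn.witt_zero_eq_mul (hD : IsPartialDeriv D) {d : ℤ} {x : RF k l}
    (hx : IsHomogeneousOn Finset.univ d x) : witt D 0 x = d * x := by
  obtain ⟨a, b, hb, rfl⟩ := IsFractionRing.div_surjective (A := MvPolynomial (Fin l) k) x
  have hb0 : algebraMap (MvPolynomial (Fin l) k) (RF k l) b ≠ 0 :=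
    IsFractionRing.to_map_ne_zero_of_mem_nonZeroDivisors hb
  obtain ⟨m, n, rfl⟩ : ∃ m n : ℕ, d = n - m := ⟨(-d).toNat, d.toNat, by omega⟩
  have hderiv : m * (algebraMap _ (RF k l) a * algebraMap _ _ b) +
        witt D 0 (algebraMap _ _ a) * algebraMap _ _ b =
      n * (algebraMap _ (RF k l) b * algebraMap _ _ a) +
        witt D 0 (algebraMap _ _ b) * algebraMap _ _ a := by
    simpa [Polynomial.derivative_mul, Polynomial.derivative_X_pow, eval_one_scaleAux,
      ← witt_zero_algebraMap hD] using
      congrArg (fun F ↦ algebraMap _ (RF k l) (F.derivative.eval 1))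
        (hx.scaleAux_mul_eq (nonZeroDivisors.ne_zero hb))
  rw [Derivation.leibniz_div]
  simp only [smul_eq_mul]
  push_cast
  field_simp
  linear_combination hderiv

lemma isSl2Triple_witt [CharZero k] [NeZero l] (hD : IsPartialDeriv D) :
    IsSl2Triple (2 • witt D 0) (-witt D 1) (witt D (-1)) where
  h_ne_zero h := by
    have := DFunLike.congr_fun h (zv 0)
    simp [witt_zv hD, zv_ne_zero] at this
  lie_e_f := by
    rw [neg_lie, lie_witt hD]
    norm_num
    norm_cast
  lie_h_e_nsmul := by
    rw [nsmul_lie, lie_neg, lie_witt hD]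
    norm_num
  lie_h_f_nsmul := by
    rw [nsmul_lie, lie_witt hD]
    norm_num

lemma Delta_eq_zero_of_DeltaStar_eq_zero [CharZero k] (hD : IsPartialDeriv D) {n : Fin l → ℤ}
    {d : ℤ} {x : RF k l} (hx : DeltaStar D n x = 0) (hd : IsHomogeneousOn Finset.univ d x)
    (hdn : 2 * d + ∑ i, n i ≤ 0) {N : ℕ} (hN : (Delta D)^[N] x = 0) : Delta D x = 0 := by
  rcases eq_zero_or_neZero l with rfl | hl
  · simp [Delta]
  have hfun : Delta D = witt D (-1) := funext Delta_eq_witt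
  rw [hfun] at hN ⊢
  refine f_apply_eq_zero_of_e_apply_eq_mul (isSl2Triple_witt hD) (g := ∑ i, (n i : RF k l) * zv i)
    (c := ∑ i, n i) (d := 2 * d) ?_ ?_ ?_ ?_ hdn hN
  · simp [map_sum, Derivation.leibniz, witt_zv hD, Finset.mul_sum, mul_left_comm]
  · simp [map_sum, Derivation.leibniz, witt_zv hD]
  · rw [DeltaStar_eq_witt] at hx
    rw [Derivation.neg_apply]
    linear_combination -hx
  · rw [Derivation.smul_apply, hd.witt_zero_eq_mul hD]
    push_cast
    ring

end Derivations

section Phi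

open RatFunc WithZero

variable {k : Type} [Field k] {l : ℕ} {D : Fin l → Derivation k (RF k l) (RF k l)}

/-- The monomial `∏_{i<j} (zᵢ - z_j)^{e_{ij}}` in the differences of the variables: the second
factor of an element of `Φ^l`. -/
def diffMonomial (k : Type) [Field k] {l : ℕ} (e : Fin l → Fin l → ℤ) : RF k l :=
  ∏ i : Fin l, ∏ j : Fin l, if i < j then (zv i - zv j) ^ e i j else 1

lemma diffMonomial_induction {P : RF k l → Prop} (one : P 1) (mul : ∀ x y, P x → P y → P (x * y))
    (zpow : ∀ a b (n : ℤ), a ≠ b → P ((zv a - zv b) ^ n)) (e : Fin l → Fin l → ℤ) :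
    P (diffMonomial k e) := by
  refine Finset.prod_induction _ P mul one fun i _ ↦ Finset.prod_induction _ P mul one fun j _ ↦ ?_
  split_ifs with hij
  · exact zpow i j _ hij.ne
  · exact one

lemma zv_sub_zv (a b : Fin l) :
    zv a - zv b =
      algebraMap (MvPolynomial (Fin l) k) (RF k l) (MvPolynomial.X a - MvPolynomial.X b) :=
  (map_sub _ _ _).symm

lemma diffMonomial_ne_zero (e : Fin l → Fin l → ℤ) : diffMonomial k e ≠ 0 := by
  refine diffMonomial_induction (P := (· ≠ 0)) one_ne_zero (fun _ _ ↦ mul_ne_zero)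
    (fun a b n hab ↦ ?_) e
  rw [zv_sub_zv]
  exact zpow_ne_zero n (IsFractionRing.to_map_eq_zero_iff.not.2 (X_sub_X_ne_zero hab))

lemma witt_neg_one_diffMonomial (hD : IsPartialDeriv D) (e : Fin l → Fin l → ℤ) :
    witt D (-1) (diffMonomial k e) = 0 := by
  refine diffMonomial_induction (P := fun x ↦ witt D (-1) x = 0) (witt D (-1)).map_one_eq_zero
    (fun x y hx hy ↦ ?_) (fun a b n _ ↦ ?_) e
  · simp [Derivation.leibniz, hx, hy]
  · simp [Derivation.leibniz_zpow, witt_zv hD]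

lemma polynomialValuationX_subPair_diffMonomial [CharZero k] {i j : Fin l} (hij : i ≠ j)
    (e : Fin l → Fin l → ℤ) :
    polynomialValuationX (RF k l) (subPair i j (diffMonomial k e)) =
      polynomialValuationX (RF k l) (scaleJ {i, j} (diffMonomial k e)) := by
  refine diffMonomial_induction (P := fun x ↦ polynomialValuationX (RF k l) (subPair i j x) =
    polynomialValuationX (RF k l) (scaleJ {i, j} x)) (by simp) (fun x y hx hy ↦ ?_)
    (fun a b n _ ↦ ?_) e
  · simp only [map_mul, hx, hy]
  · rw [zv_sub_zv, map_zpow₀, map_zpow₀, map_zpow₀, map_zpow₀,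
      polynomialValuationX_subPair_algebraMap hij (translationDeriv_X_sub_X a b)]

lemma Delta_algebraMap_mul_diffMonomial (hD : IsPartialDeriv D) (p : MvPolynomial (Fin l) k)
    (e : Fin l → Fin l → ℤ) :
    Delta D (algebraMap _ _ p * diffMonomial k e) =
      algebraMap _ _ (translationDeriv (Fin l) k p) * diffMonomial k e := by
  rw [Delta_eq_witt, Derivation.leibniz, witt_neg_one_diffMonomial hD,
    witt_neg_one_algebraMap hD, smul_zero, zero_add, smul_eq_mul, mul_comm]

lemma exists_Delta_iterate_eq_zero (hD : IsPartialDeriv D) {α : RF k l} (hα : α ∈ Phi k l) :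
    ∃ N, (Delta D)^[N] α = 0 := by
  obtain ⟨p, e, rfl⟩ := hα
  obtain ⟨N, hN⟩ := translationDeriv_isLocallyNilpotent p
  have hiter : (Delta D)^[N] (algebraMap _ _ p * diffMonomial k e) =
      algebraMap _ _ ((translationDeriv (Fin l) k)^[N] p) * diffMonomial k e :=
    (Function.Semiconj.iterate_right (f := fun q ↦ algebraMap _ _ q * diffMonomial k e)
      (fun q ↦ (Delta_algebraMap_mul_diffMonomial hD q e).symm) N p).symm
  exact ⟨N, by rw [← diffMonomial, hiter, hN, map_zero, zero_mul]⟩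

lemma polynomialValuationX_subPair_eq_scaleJ [CharZero k] (hD : IsPartialDeriv D) {α : RF k l}
    (hα : α ∈ Phi k l) (hΔ : Delta D α = 0) {i j : Fin l} (hij : i ≠ j) :
    polynomialValuationX (RF k l) (subPair i j α) =
      polynomialValuationX (RF k l) (scaleJ {i, j} α) := by
  obtain ⟨p, e, rfl⟩ := hα
  rw [← diffMonomial] at hΔ ⊢
  have hp : translationDeriv (Fin l) k p = 0 := by
    rw [Delta_algebraMap_mul_diffMonomial hD] at hΔ
    simpa [diffMonomial_ne_zero] using hΔ
  simp only [map_mul, polynomialValuationX_subPair_algebraMap hij hp,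
    polynomialValuationX_subPair_diffMonomial hij]

lemma rho_eq_zero_of_component_eq_zero [CharZero k] (hD : IsPartialDeriv D) {α : RF k l}
    (hα : α ∈ Phi k l) (hΔ : Delta D α = 0) {i j : Fin l} (hij : i ≠ j) (w : Fin l → ℤ) {N : ℤ}
    (hN : ∀ n < N, component {i, j} w n α = 0) {m : ℤ} (hm : m < N - w i - w j) :
    rho i j m α = 0 := by
  have hscale : polynomialValuationX (RF k l) (scaleJ {i, j} α) ≤ exp (-(N - w i - w j)) :=
    polynomialValuationX_le_exp_iff.2 fun n hn ↦ by
      simpa [component, Finset.sum_pair hij] using hN (n + w i + w j) (by omega)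
  rw [← polynomialValuationX_subPair_eq_scaleJ hD hα hΔ hij] at hscale
  exact polynomialValuationX_le_exp_iff.1 hscale m hm

end Phi

theorem statement8_general {k : Type} [Field k] [CharZero k] {l : ℕ}
    {D : Fin l → Derivation k (RF k l) (RF k l)} (hD : IsPartialDeriv D) {α : RF k l}
    (hα : α ∈ Phi k l) {n : Fin l → ℤ} (hreg : DeltaStar D n α = 0) {d : ℤ}
    (hd : IsHomogeneousOn Finset.univ d α) (hdn : 2 * d + ∑ i, n i ≤ 0) {i j : Fin l}
    (hij : i ≠ j) (w : Fin l → ℤ) {N : ℤ} (hN : ∀ n < N, component {i, j} w n α = 0) {m : ℤ}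
    (hm : m < N - w i - w j) : rho i j m α = 0 := by
  obtain ⟨M, hM⟩ := exists_Delta_iterate_eq_zero hD hα
  exact rho_eq_zero_of_component_eq_zero hD hα
    (Delta_eq_zero_of_DeltaStar_eq_zero hD hreg hd hdn hM) hij w hN hm

section Admissible

variable {k : Type} [Field k] {l : ℕ} {D : Fin l → Derivation k (RF k l) (RF k l)} {α : RF k l}

lemma Admissible.component_eq_zero {S J : Finset (Fin l)} (h : Admissible D S α) (hJ : J ⊆ S)
    {n : ℤ} (hn : n < 0 ∨ n = 1) : component J (fun _ ↦ 2) n α = 0 :=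
  h.2.2.2.2 J hJ n hn

lemma AdmissibleInd.component_pair_eq_zero (h : AdmissibleInd D Finset.univ α) (hl : 3 ≤ l)
    {i j : Fin l} (hij : i ≠ j) {n : ℤ} (hn : n < 2) : component {i, j} (fun _ ↦ 2) n α = 0 := by
  have hpair : ({i, j} : Finset (Fin l)) ≠ Finset.univ := fun hu ↦ by
    have := congrArg Finset.card hu
    rw [Finset.card_pair hij, Finset.card_fin] at this
    omega
  rcases eq_or_ne n 0 with rfl | hn0
  · exact h.2 _ (Finset.subset_univ _) (Finset.insert_ne_empty _ _) hpair
  · exact h.1.component_eq_zero (Finset.subset_univ _) (by omega)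

lemma Admissible.rho_eq_zero [CharZero k] (hD : IsPartialDeriv D)
    (h : Admissible D Finset.univ α) {i j : Fin l} (hij : i ≠ j) {N : ℤ}
    (hN : ∀ n < N, component {i, j} (fun _ ↦ 2) n α = 0) (m : ℤ) (hm : m < N - 4) :
    rho i j m α = 0 := by
  obtain ⟨hα, -, hreg, hhom, -⟩ := h
  have hreg' : DeltaStar D (fun _ ↦ 4) α = 0 := by simpa [DeltaStar] using hreg
  have hweight : 2 * -(2 * (Finset.univ : Finset (Fin l)).card : ℤ) + ∑ _ : Fin l, 4 ≤ 0 := by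
    simp only [Finset.card_fin, Finset.sum_const, nsmul_eq_mul]
    omega
  exact statement8_general hD hα hreg' hhom hweight hij (fun _ ↦ 2) hN (by omega)

end Admissible

/-- for `l ≥ 3`, `α ∈ R^l` and `1 ≤ i < j ≤ l` one has
`ord_{ij}α ≥ -4`; and if moreover `α ∈ R₀^l`, then `ord_{ij}α ≥ -2`. -/
theorem statement8 {k : Type} [Field k] [CharZero k] {l : ℕ} (hl : 3 ≤ l)
    (D : Fin l → Derivation k (RF k l) (RF k l)) (hD : IsPartialDeriv D)
    (α : RF k l) (hadm : Admissible D Finset.univ α)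
    (i j : Fin l) (hij : i < j) :
    (∀ m : ℤ, m < -4 → rho i j m α = 0) ∧
    (AdmissibleInd D Finset.univ α → ∀ m : ℤ, m < -2 → rho i j m α = 0) := by
  exact ⟨hadm.rho_eq_zero hD hij.ne (N := 0) fun n hn ↦ hadm.component_eq_zero (by simp) (.inl hn),
    fun hind ↦ hadm.rho_eq_zero hD hij.ne (N := 2) fun _ ↦ hind.component_pair_eq_zero hl hij.ne⟩

end Griess
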